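/- arXiv:2301.01167 — 5 statements merged into one kernel-verified Lean document; each statement's English description precedes it below -/
import Mathlib

section
/- Let G be a finite connected simple graph on a vertex set V with n = |V| ≥ 1 vertices, L its graph Laplacian matrix, and p : V → ℝ. Suppose x : ℝ → (V → ℝ) is differentiable, x(0) = 0, and x'(t) = p − L·x(t) for all t ≥ 0. Then x'(t) converges as t → +∞ to the constant vector each of whose entries equals (Σ_{v∈V} p(v))/n. -/
open Matrix Filter

/-!
The residual `y = p - L x` solves `y' = -L y`. In an orthonormal eigenbasis of the positive
semidefinite operator `L`, the coordinate of `y` for the eigenvalue `μ` is a multiple of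
`exp (-μ t)`: it is constant for `μ = 0` and tends to `0` for `μ > 0`. So `y` tends to the
orthogonal projection onto `ker L` of its initial value `p - L x₀`, which is also the projection
of `p`, because the range of `L` is orthogonal to its kernel. The kernel of a graph Laplacian is
the space of functions constant on connected components, and the projection onto it averages
over components.
-/

open scoped BigOperators RealInnerProductSpace Topology

section ExponentialDecay

variable {F : Type*} [NormedAddCommGroup F] [NormedSpace ℝ F] {f : ℝ → F} {a μ : ℝ}

theorem eq_exp_smul_of_hasDerivAt_neg_smul (hf : ∀ t ≥ a, HasDerivAt f (-(μ • f t)) t) {t : ℝ}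
    (ht : a ≤ t) : f t = Real.exp (-(μ * (t - a))) • f a := by
  have hexp (s : ℝ) : HasDerivAt (fun s => Real.exp (μ * (s - a)))
      (Real.exp (μ * (s - a)) * μ) s := by
    simpa using (((hasDerivAt_id s).sub_const a).const_mul μ).exp
  have hderiv (s : ℝ) (hs : a ≤ s) :
      HasDerivAt (fun s => Real.exp (μ * (s - a)) • f s) 0 s :=
    ((hexp s).fun_smul (hf s hs)).congr_deriv (by rw [smul_neg, mul_smul, neg_add_cancel])
  have hconst : Real.exp (μ * (t - a)) • f t = f a := by
    simpa using constant_of_has_deriv_right_zero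
      (fun s hs => (hderiv s hs.1).continuousAt.continuousWithinAt)
      (fun s hs => (hderiv s hs.1).hasDerivWithinAt) t ⟨ht, le_rfl⟩
  rw [← hconst, smul_smul, ← Real.exp_add, neg_add_cancel, Real.exp_zero, one_smul]

theorem tendsto_zero_of_hasDerivAt_neg_smul (hμ : 0 < μ)
    (hf : ∀ t ≥ a, HasDerivAt f (-(μ • f t)) t) : Tendsto f atTop (𝓝 0) := by
  have hlin : Tendsto (fun t => μ * (t - a)) atTop atTop :=
    (tendsto_atTop_add_const_right _ (-a) tendsto_id).const_mul_atTop hμ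
  have hexp : Tendsto (fun t => Real.exp (-(μ * (t - a))) • f a) atTop (𝓝 0) := by
    simpa using (Real.tendsto_exp_neg_atTop_nhds_zero.comp hlin).smul_const (f a)
  refine hexp.congr' ?_
  filter_upwards [eventually_ge_atTop a] with t ht
  exact (eq_exp_smul_of_hasDerivAt_neg_smul hf ht).symm

end ExponentialDecay

section PositiveFlow

variable {E : Type*} [NormedAddCommGroup E] [InnerProductSpace ℝ E] {T : E →ₗ[ℝ] E} {a μ : ℝ}
  {x y : ℝ → E} {p w : E}

theorem starProjection_ker_apply_eq_zero [T.ker.HasOrthogonalProjection] (hT : T.IsSymmetric)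
    (z : E) : T.ker.starProjection (T z) = 0 := by
  rw [Submodule.starProjection_apply_eq_zero_iff, Submodule.mem_orthogonal]
  intro w hw
  rw [← hT, LinearMap.mem_ker.1 hw, inner_zero_left]

theorem tendsto_inner_starProjection_ker [T.ker.HasOrthogonalProjection] (hT : T.IsSymmetric)
    (hμ : 0 ≤ μ) (hw : T w = μ • w) (hy : ∀ t ≥ a, HasDerivAt y (-T (y t)) t) :
    Tendsto (fun t => ⟪w, y t⟫) atTop (𝓝 ⟪w, T.ker.starProjection (y a)⟫) := by
  have hTw (z : E) : ⟪w, T z⟫ = μ • ⟪w, z⟫ := by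
    rw [← hT, hw, real_inner_smul_left, smul_eq_mul]
  have hderiv : ∀ t ≥ a, HasDerivAt (fun t => ⟪w, y t⟫) (-(μ • ⟪w, y t⟫)) t := fun t ht => by
    simpa [hTw] using (hasDerivAt_const t w).inner ℝ (hy t ht)
  obtain rfl | hpos := hμ.eq_or_lt
  · have hker : w ∈ T.ker := by simpa using hw
    rw [← Submodule.inner_starProjection_left_eq_right,
      Submodule.starProjection_eq_self_iff.2 hker]
    refine tendsto_const_nhds.congr' ?_
    filter_upwards [eventually_ge_atTop a] with t ht
    simpa using (eq_exp_smul_of_hasDerivAt_neg_smul hderiv ht).symm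
  · have horth : ⟪w, T.ker.starProjection (y a)⟫ = 0 := by
      have hproj : T (T.ker.starProjection (y a)) = 0 := T.ker.starProjection_apply_mem (y a)
      simpa [hproj, hpos.ne'] using hTw (T.ker.starProjection (y a))
    rw [horth]
    exact tendsto_zero_of_hasDerivAt_neg_smul hpos hderiv

variable [FiniteDimensional ℝ E]

theorem tendsto_starProjection_ker (hT : T.IsPositive)
    (hy : ∀ t ≥ a, HasDerivAt y (-T (y t)) t) :
    Tendsto y atTop (𝓝 (T.ker.starProjection (y a))) := by
  let b := hT.isSymmetric.eigenvectorBasis rfl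
  have hcoord := tendsto_finsetSum Finset.univ fun i _ =>
    (tendsto_inner_starProjection_ker hT.isSymmetric (hT.nonneg_eigenvalues rfl i)
      (hT.isSymmetric.apply_eigenvectorBasis rfl i) hy).smul_const (b i)
  simpa only [b, OrthonormalBasis.sum_repr'] using hcoord

theorem tendsto_sub_apply_starProjection_ker (hT : T.IsPositive)
    (hx : ∀ᶠ t in atTop, HasDerivAt x (p - T (x t)) t) :
    Tendsto (fun t => p - T (x t)) atTop (𝓝 (T.ker.starProjection p)) := by
  obtain ⟨a, ha⟩ := eventually_atTop.1 hx
  have hresidual : ∀ t ≥ a, HasDerivAt (fun t => p - T (x t)) (-T (p - T (x t))) t :=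
    fun t ht => (T.toContinuousLinearMap.hasFDerivAt.comp_hasDerivAt t (ha t ht)).const_sub p
  simpa [starProjection_ker_apply_eq_zero hT.isSymmetric] using
    tendsto_starProjection_ker hT hresidual

end PositiveFlow

section ComponentAverage

variable {V : Type*} [Fintype V] [DecidableEq V] (G : SimpleGraph V) [DecidableRel G.Adj]

/-- The average of `p` over the connected component of each vertex: the orthogonal projection of
`p` onto the functions constant on components. -/
noncomputable def componentAverage (p : V → ℝ) (v : V) : ℝ :=
  𝔼 u with G.Reachable v u, p u

variable {G}

theorem filter_reachable_eq_of_reachable {u v : V} (huv : G.Reachable u v) :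
    Finset.univ.filter (G.Reachable u) = Finset.univ.filter (G.Reachable v) :=
  Finset.filter_congr fun _ _ => ⟨huv.symm.trans, huv.trans⟩

theorem componentAverage_eq_of_reachable (p : V → ℝ) {u v : V} (huv : G.Reachable u v) :
    componentAverage G p u = componentAverage G p v :=
  Finset.expect_congr (filter_reachable_eq_of_reachable huv) fun _ _ => rfl

theorem componentAverage_of_connected (hG : G.Connected) (p : V → ℝ) (v : V) :
    componentAverage G p v = (∑ u, p u) / Fintype.card V := by
  simp [componentAverage, hG.preconnected v _, Fintype.expect_eq_sum_div_card]

theorem componentAverage_mul {w : V → ℝ} (hw : ∀ u v, G.Reachable u v → w u = w v)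
    (p : V → ℝ) : componentAverage G (w * p) = w * componentAverage G p := by
  funext v
  simp only [componentAverage, Pi.mul_apply, Finset.mul_expect]
  refine Finset.expect_congr rfl fun u hu => ?_
  rw [hw v u (Finset.mem_filter.1 hu).2]

variable (G)

theorem sum_componentAverage (p : V → ℝ) : ∑ v, componentAverage G p v = ∑ v, p v :=
  calc ∑ v, componentAverage G p v
      = ∑ v, ∑ u with G.Reachable v u, p u / Finset.card {w | G.Reachable u w} := by
        refine Finset.sum_congr rfl fun v _ => ?_
        rw [componentAverage, Finset.expect_eq_sum_div_card, Finset.sum_div]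
        refine Finset.sum_congr rfl fun u hu => ?_
        rw [filter_reachable_eq_of_reachable (Finset.mem_filter.1 hu).2]
    _ = ∑ u, ∑ v with G.Reachable u v, p u / Finset.card {w | G.Reachable u w} :=
        Finset.sum_comm' (by simp [SimpleGraph.reachable_comm])
    _ = ∑ u, 𝔼 v with G.Reachable u v, p u := by
        simp only [Finset.expect_eq_sum_div_card, Finset.sum_div]
    _ = ∑ u, p u :=
        Finset.sum_congr rfl fun u _ => Finset.expect_const ⟨u, by simp⟩ (p u)

theorem starProjection_ker_lapMatrix (p : V → ℝ) :
    (toEuclideanLin (G.lapMatrix ℝ)).ker.starProjection (WithLp.toLp 2 p) =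
      WithLp.toLp 2 (componentAverage G p) := by
  have hker (w : EuclideanSpace ℝ V) : w ∈ (toEuclideanLin (G.lapMatrix ℝ)).ker ↔
      ∀ u v, G.Reachable u v → w u = w v := by
    rw [LinearMap.mem_ker, toLpLin_apply, WithLp.toLp_eq_zero,
      G.lapMatrix_mulVec_eq_zero_iff_forall_reachable]
  have hmem : WithLp.toLp 2 (componentAverage G p) ∈ (toEuclideanLin (G.lapMatrix ℝ)).ker :=
    (hker _).2 fun _ _ => componentAverage_eq_of_reachable p
  refine Submodule.eq_starProjection_of_mem_of_inner_eq_zero hmem fun w hw => ?_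
  have hsum := sum_componentAverage G (w.ofLp * p)
  rw [componentAverage_mul ((hker w).1 hw)] at hsum
  simpa [PiLp.inner_apply, mul_sub, sub_eq_zero] using hsum.symm

end ComponentAverage

theorem stmt_2_general {V : Type*} [Fintype V] [DecidableEq V] (G : SimpleGraph V)
    [DecidableRel G.Adj] (p : V → ℝ) (x : ℝ → V → ℝ)
    (hx : ∀ᶠ t in atTop, HasDerivAt x (p - G.lapMatrix ℝ *ᵥ x t) t) :
    Tendsto (deriv x) atTop (𝓝 (componentAverage G p)) := by
  let L := toEuclideanLin (G.lapMatrix ℝ)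
  have hL : L.IsPositive := isPositive_toEuclideanLin_iff.2 (G.posSemidef_lapMatrix ℝ)
  have hode : ∀ᶠ t in atTop, HasDerivAt (fun t => WithLp.toLp 2 (x t))
      (WithLp.toLp 2 p - L (WithLp.toLp 2 (x t))) t :=
    hx.mono fun t ht => (PiLp.hasFDerivAt_toLp 2 (x t)).comp_hasDerivAt t ht
  have hlim := tendsto_sub_apply_starProjection_ker hL hode
  rw [starProjection_ker_lapMatrix] at hlim
  refine (((PiLp.continuous_ofLp 2 _).tendsto _).comp hlim).congr' ?_
  exact hx.mono fun t ht => ht.deriv.symm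

/-- The distributed consensus estimator: if `x` solves `x' = p - L x` with `x 0 = 0`,
where `L` is the Laplacian of a finite connected simple graph, then `x'(t)` converges,
as `t → +∞`, to the constant vector whose entries are the average `(∑ v, p v) / n`. -/
theorem stmt_2 {V : Type*} [Fintype V] [DecidableEq V] (G : SimpleGraph V)
    [DecidableRel G.Adj] (hG : G.Connected) (n : ℕ) (hn : n = Fintype.card V)
    (hn1 : 1 ≤ n) (p : V → ℝ) (x : ℝ → V → ℝ)
    (hdiff : Differentiable ℝ x) (h0 : x 0 = 0)
    (hode : ∀ t : ℝ, 0 ≤ t → deriv x t = p - G.lapMatrix ℝ *ᵥ x t) :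
    Tendsto (fun t : ℝ => deriv x t) atTop (nhds (fun _ : V => (∑ v, p v) / n)) := by
  rw [hn, ← funext (componentAverage_of_connected hG p)]
  exact stmt_2_general G p x
    ((eventually_ge_atTop 0).mono fun t ht => hode t ht ▸ (hdiff t).hasDerivAt)
end

section
/- Let n ≥ 1, let H be a connected simple graph on the index set {1,…,n}, let p̄ ≥ 0, and let P : {1,…,n} → ℝ be monotone nondecreasing in the index (P_1 ≤ P_2 ≤ … ≤ P_n). If |P_l − P_m| ≤ p̄ for every pair of indices l, m adjacent in H, then P_{l+1} ≤ P_l + p̄ for every l ∈ {1,…,n−1}. -/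
theorem exists_adj_mem_notMem_of_reachable {V : Type*} {G : SimpleGraph V}
    {a b : V} (hG : G.Reachable a b) {S : Set V} (ha : a ∈ S) (hb : b ∉ S) :
    ∃ u ∈ S, ∃ v ∉ S, G.Adj u v := by
  obtain ⟨walk⟩ := hG
  obtain ⟨d, -, hfst, hsnd⟩ := walk.exists_boundary_dart S ha hb
  exact ⟨d.fst, hfst, d.snd, hsnd, d.adj⟩

theorem exists_adj_le_ge_of_reachable_of_covBy {V : Type*} [LinearOrder V] {G : SimpleGraph V}
    {a b : V} (hG : G.Reachable a b) (hab : a ⋖ b) : ∃ u ≤ a, ∃ v ≥ b, G.Adj u v := by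
  obtain ⟨u, hu, v, hv, huv⟩ :=
    exists_adj_mem_notMem_of_reachable hG (S := Set.Iic a) Set.self_mem_Iic hab.lt.not_ge
  exact ⟨u, hu, v, hab.ge_of_gt (not_le.mp hv), huv⟩

theorem stmt_6_general {V α : Type*} [LinearOrder V] [AddCommGroup α] [Lattice α]
    [IsOrderedAddMonoid α] {H : SimpleGraph V} {pbar : α} {P : V → α} (hmono : Monotone P)
    (hadj : ∀ l m : V, H.Adj l m → |P l - P m| ≤ pbar) {a b : V} (hH : H.Reachable a b)
    (hab : a ⋖ b) : P b ≤ P a + pbar := by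
  obtain ⟨u, hu, v, hv, huv⟩ := exists_adj_le_ge_of_reachable_of_covBy hH hab
  have hjump : P v - P u ≤ pbar := (le_abs_self _).trans (hadj v u huv.symm)
  calc
    P b ≤ P v := hmono hv
    _ ≤ P u + pbar := sub_le_iff_le_add'.mp hjump
    _ ≤ P a + pbar := by gcongr; exact hmono hu

/-- If the power imbalances, sorted in nondecreasing order of the island index, differ by at
most `pbar` across any edge of the connected condensed graph `H`, then consecutive
imbalances differ by at most `pbar`. -/
theorem stmt_6 (n : ℕ) (hn : 1 ≤ n) (H : SimpleGraph (Fin n)) (hH : H.Connected)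
    (pbar : ℝ) (hpbar : 0 ≤ pbar) (P : Fin n → ℝ) (hmono : Monotone P)
    (hadj : ∀ l m : Fin n, H.Adj l m → |P l - P m| ≤ pbar) :
    ∀ l : Fin n, ∀ h : (l : ℕ) + 1 < n, P ⟨(l : ℕ) + 1, h⟩ ≤ P l + pbar := fun l h ↦
  stmt_6_general hmono hadj (hH.preconnected l ⟨l + 1, h⟩)
    (Fin.covBy_iff.mpr (Order.covBy_add_one _))
end

section
/- Let P_l, P_m, p be real numbers satisfying (P_l > P_m and p < 0) or (P_l < P_m and p > 0). Then min(P_l, P_m) < min(P_l + p, P_m − p) if and only if |P_m − P_l| > |p|. -/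
/-!
A migration preserves the total `a + b` of the two imbalances, so the smaller new imbalance exceeds
the old minimum exactly when the larger one stays below the old maximum: the minimum increases if
and only if `a + p` lies strictly between `a` and `b`. Translating by `-a`, this says that `p` lies
strictly between `0` and `b - a`, that is, `p` has the sign of `b - a` and smaller absolute value.
-/

section OrderedAddCommGroup

variable {G : Type*} [AddCommGroup G] [LinearOrder G] [IsOrderedAddMonoid G]

theorem add_mem_uIoo_add_left_iff (a b c x : G) :
    a + x ∈ Set.uIoo (a + b) (a + c) ↔ x ∈ Set.uIoo b c := by
  simp only [Set.uIoo, Set.mem_Ioo, min_add_add_left, max_add_add_left, add_lt_add_iff_left]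

theorem mem_uIoo_zero_iff_sign_and_abs_lt (p d : G) :
    p ∈ Set.uIoo 0 d ↔ ((d < 0 ∧ p < 0) ∨ (0 < d ∧ 0 < p)) ∧ |p| < |d| := by
  rcases lt_trichotomy d 0 with hd | rfl | hd
  · have h : p < 0 → (d < p ↔ |p| < |d|) := fun hp ↦ by
      rw [abs_of_neg hp, abs_of_neg hd, neg_lt_neg_iff]
    simp only [Set.uIoo_of_gt hd, Set.mem_Ioo, hd, hd.not_gt, true_and, false_and, or_false]
    exact and_comm.trans (and_congr_right h)
  · simp
  · have h : 0 < p → (p < d ↔ |p| < |d|) := fun hp ↦ by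
      rw [abs_of_pos hp, abs_of_pos hd]
    simp only [Set.uIoo_of_lt hd, Set.mem_Ioo, hd, hd.not_gt, true_and, false_and, false_or]
    exact and_congr_right h

theorem min_lt_min_add_sub_iff_add_mem_uIoo (a b p : G) :
    min a b < min (a + p) (b - p) ↔ a + p ∈ Set.uIoo a b := by
  have min_lt_iff_lt_max : min a b < b - p ↔ a + p < max a b :=
    calc min a b < b - p
        ↔ a + (min a b + p) < a + b := by rw [add_lt_add_iff_left, lt_sub_iff_add_lt]
      _ ↔ min a b + (a + p) < min a b + max a b := by rw [min_add_max, add_left_comm]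
      _ ↔ a + p < max a b := add_lt_add_iff_left _
  rw [lt_min_iff, min_lt_iff_lt_max, Set.uIoo, Set.mem_Ioo]

theorem stmt_9_general (Pl Pm p : G) :
    min Pl Pm < min (Pl + p) (Pm - p) ↔
      ((Pl > Pm ∧ p < 0) ∨ (Pl < Pm ∧ p > 0)) ∧ |Pm - Pl| > |p| :=
  calc min Pl Pm < min (Pl + p) (Pm - p)
      ↔ Pl + p ∈ Set.uIoo Pl Pm := min_lt_min_add_sub_iff_add_mem_uIoo Pl Pm p
    _ ↔ p ∈ Set.uIoo 0 (Pm - Pl) := by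
      simpa only [add_zero, add_sub_cancel] using add_mem_uIoo_add_left_iff Pl 0 (Pm - Pl) p
    _ ↔ ((Pl > Pm ∧ p < 0) ∨ (Pl < Pm ∧ p > 0)) ∧ |Pm - Pl| > |p| := by
      rw [mem_uIoo_zero_iff_sign_and_abs_lt, sub_neg, sub_pos]

end OrderedAddCommGroup

/-- Under the sign hypothesis on the migrating node, the migration rule (the minimum of the
two neighboring imbalances strictly increases) is equivalent to the gap condition
`|P_m - P_l| > |p|`. -/
theorem stmt_9 (Pl Pm p : ℝ)
    (hsign : (Pl > Pm ∧ p < 0) ∨ (Pl < Pm ∧ p > 0)) :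
    min Pl Pm < min (Pl + p) (Pm - p) ↔ |Pm - Pl| > |p| :=
  (stmt_9_general Pl Pm p).trans (and_iff_right hsign)
end

section
/- Let n ≥ 2, let P : {1,…,n} → ℝ, let l ≠ m be two indices, let p and c be real numbers, and define P' : {1,…,n} → ℝ by P'_l = P_l + p, P'_m = P_m − p, and P'_j = P_j for j ∉ {l, m}. If ((P_l > P_m and p < 0) or (P_l < P_m and p > 0)) and |P_m − P_l| > |p|, then the Euclidean norm of P' − c·𝟏 is strictly smaller than the Euclidean norm of P − c·𝟏, where 𝟏 is the all-ones vector. -/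
/-!
A migration transfers `p` between the imbalances `P l` and `P m` and preserves their sum. The sign
hypothesis says that the transfer brings them towards each other and the gap condition that it does
not overshoot, so `P l + p = a P l + b P m` and `P m - p = b P l + a P m` for some `a, b > 0` with
`a + b = 1`. By Jensen's inequality such a transfer strictly decreases `∑ j, φ (P j)` for every
strictly convex `φ`, in particular for `φ x = (x - c) ^ 2`.
-/

theorem sum_lt_sum_of_eq_off_pair {ι M : Type*} [Fintype ι] [AddCommMonoid M] [Preorder M]
    [AddLeftStrictMono M] {f g : ι → M} {i j : ι} (hij : i ≠ j)
    (hrest : ∀ k, k ≠ i → k ≠ j → f k = g k) (hpair : f i + f j < g i + g j) :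
    ∑ k, f k < ∑ k, g k := by
  classical
  have hcompl : ∑ k ∈ {i, j}ᶜ, f k = ∑ k ∈ {i, j}ᶜ, g k := by
    refine Finset.sum_congr rfl fun k hk => ?_
    simp only [Finset.mem_compl, Finset.mem_insert, Finset.mem_singleton, not_or] at hk
    exact hrest k hk.1 hk.2
  calc
    ∑ k, f k = ∑ k ∈ {i, j}ᶜ, f k + (f i + f j) := by
      rw [← Finset.sum_compl_add_sum {i, j} f, Finset.sum_pair hij]
    _ < ∑ k ∈ {i, j}ᶜ, g k + (g i + g j) := by
      rw [hcompl]
      gcongr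
    _ = ∑ k, g k := by
      rw [← Finset.sum_compl_add_sum {i, j} g, Finset.sum_pair hij]

section Transfer

variable {𝕜 E β : Type*} [Semiring 𝕜] [PartialOrder 𝕜] [AddCommGroup E] [Module 𝕜 E]
  [AddCommMonoid β] [PartialOrder β] [AddLeftStrictMono β] [Module 𝕜 β] {s : Set E} {φ : E → β}

theorem map_add_add_map_sub_lt_of_strictConvexOn (hφ : StrictConvexOn 𝕜 s φ) {x y p : E}
    (hx : x ∈ s) (hy : y ∈ s) (hxy : x ≠ y) (hp : x + p ∈ openSegment 𝕜 x y) :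
    φ (x + p) + φ (y - p) < φ x + φ y := by
  obtain ⟨a, b, ha, hb, hab, hadd⟩ := hp
  have hba : b + a = 1 := (add_comm b a).trans hab
  have hsub : b • x + a • y = y - p := by
    calc
      b • x + a • y = (a + b) • x + (a + b) • y - (a • x + b • y) := by
        rw [add_smul, add_smul]
        abel
      _ = y - p := by
        rw [hab, one_smul, one_smul, hadd]
        abel
  calc
    φ (x + p) + φ (y - p) < (a • φ x + b • φ y) + (b • φ x + a • φ y) := by
      rw [← hadd, ← hsub]
      exact add_lt_add (hφ.2 hx hy hxy ha hb hab) (hφ.2 hx hy hxy hb ha hba)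
    _ = (a + b) • φ x + (b + a) • φ y := by
      rw [add_smul, add_smul]
      abel
    _ = φ x + φ y := by rw [hab, hba, one_smul, one_smul]

theorem stmt_12_general {ι : Type*} [Fintype ι] (hφ : StrictConvexOn 𝕜 s φ) {P P' : ι → E}
    {l m : ι} {p : E} (hPl : P l ∈ s) (hPm : P m ∈ s) (hne : P l ≠ P m)
    (hl : P' l = P l + p) (hm : P' m = P m - p) (hrest : ∀ j, j ≠ l → j ≠ m → P' j = P j)
    (hp : P l + p ∈ openSegment 𝕜 (P l) (P m)) :
    ∑ j, φ (P' j) < ∑ j, φ (P j) := by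
  refine sum_lt_sum_of_eq_off_pair (ne_of_apply_ne P hne)
    (fun j hjl hjm => congrArg φ (hrest j hjl hjm)) ?_
  rw [hl, hm]
  exact map_add_add_map_sub_lt_of_strictConvexOn hφ hPl hPm hne hp

end Transfer

theorem add_mem_openSegment_of_abs_lt {𝕜 : Type*} [Field 𝕜] [LinearOrder 𝕜]
    [IsStrictOrderedRing 𝕜] {x y p : 𝕜} (hsign : (y < x ∧ p < 0) ∨ (x < y ∧ 0 < p))
    (hgap : |p| < |y - x|) : x + p ∈ openSegment 𝕜 x y := by
  rcases hsign with ⟨hyx, hp⟩ | ⟨hxy, hp⟩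
  · rw [abs_of_neg hp, abs_of_neg (sub_neg.2 hyx)] at hgap
    rw [openSegment_symm, openSegment_eq_Ioo hyx]
    constructor <;> linarith
  · rw [abs_of_pos hp, abs_of_pos (sub_pos.2 hxy)] at hgap
    rw [openSegment_eq_Ioo hxy]
    constructor <;> linarith

theorem strictConvexOn_sub_sq (c : ℝ) :
    StrictConvexOn ℝ Set.univ fun x : ℝ => (x - c) ^ 2 := by
  simpa only [Function.comp_def, ← sub_eq_add_neg, Set.preimage_univ] using
    (even_two.strictConvexOn_pow two_ne_zero).translate_left (-c)

/-- A single migration strictly decreases the Euclidean distance of the imbalance vector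
from any constant vector `c • 𝟏`. -/
theorem stmt_12 (n : ℕ) (hn : 2 ≤ n) (P P' : Fin n → ℝ) (l m : Fin n) (hlm : l ≠ m)
    (p c : ℝ)
    (hl : P' l = P l + p) (hm : P' m = P m - p)
    (hrest : ∀ j : Fin n, j ≠ l → j ≠ m → P' j = P j)
    (hsign : (P l > P m ∧ p < 0) ∨ (P l < P m ∧ p > 0))
    (hgap : |P m - P l| > |p|) :
    Real.sqrt (∑ j, (P' j - c) ^ 2) < Real.sqrt (∑ j, (P j - c) ^ 2) := by
  have hne : P l ≠ P m := hsign.elim (fun h => h.1.ne') fun h => h.1.ne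
  exact Real.sqrt_lt_sqrt (Finset.sum_nonneg fun j _ => sq_nonneg _) <|
    stmt_12_general (strictConvexOn_sub_sq c) (Set.mem_univ _) (Set.mem_univ _) hne hl hm hrest
      (add_mem_openSegment_of_abs_lt hsign hgap)
end

section
/- Let n ≥ 1 and let S be a finite set of vectors in ℝⁿ. There is no sequence P : ℕ → S such that for every k there exist indices l ≠ m in {1,…,n} and a real number p satisfying: ((P(k)_l > P(k)_m and p < 0) or (P(k)_l < P(k)_m and p > 0)), |P(k)_m − P(k)_l| > |p|, P(k+1)_l = P(k)_l + p, P(k+1)_m = P(k)_m − p, and P(k+1)_j = P(k)_j for all j ∉ {l, m}. Consequently, any sequence of such migration updates within S terminates after finitely many steps. -/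
/-!
Moving `p` from island `m` to island `l` changes the sum of squares of the imbalances by
`2 * (p * (P l - P m + p))`. The sign hypothesis makes `p` and `P l - P m` opposite in sign, and the
gap condition makes `|p| < |P l - P m|`, so this change is negative: the sum of squares is a
strictly decreasing potential.
-/

lemma mul_add_self_neg_of_abs_lt {R : Type*} [Ring R] [LinearOrder R] [IsStrictOrderedRing R]
    {p d : R} (hsign : p * d < 0) (hgap : |p| < |d|) : p * (d + p) < 0 := by
  have hp : 0 < |p| := abs_pos.mpr (left_ne_zero_of_mul hsign.ne)
  calc p * (d + p) = -(|p| * |d|) + |p| * |p| := by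
        rw [← abs_mul, abs_of_neg hsign, abs_mul_abs_self, neg_neg, mul_add]
    _ < 0 := by simpa only [neg_add_lt_iff_lt_add, add_zero] using mul_lt_mul_of_pos_left hgap hp

lemma sum_sq_sub_sum_sq_of_transfer {ι R : Type*} [Fintype ι] [CommRing R] {v w : ι → R}
    {l m : ι} {p : R} (hlm : l ≠ m) (hl : w l = v l + p) (hm : w m = v m - p)
    (hrest : ∀ j, j ≠ l → j ≠ m → w j = v j) :
    ∑ j, w j ^ 2 - ∑ j, v j ^ 2 = 2 * (p * (v l - v m + p)) :=
  calc ∑ j, w j ^ 2 - ∑ j, v j ^ 2 = ∑ j, (w j ^ 2 - v j ^ 2) :=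
        (Finset.sum_sub_distrib ..).symm
    _ = (w l ^ 2 - v l ^ 2) + (w m ^ 2 - v m ^ 2) :=
        Fintype.sum_eq_add l m hlm fun j hj ↦ by rw [hrest j hj.1 hj.2, sub_self]
    _ = 2 * (p * (v l - v m + p)) := by rw [hl, hm]; ring

section Migration

variable {ι R : Type*} [CommRing R] [LinearOrder R]

/-- A node migration takes the imbalance vector `v` to `w`: a node of power `p` moves from island
`m` to island `l`, subject to the sign hypothesis and the gap condition. Loads are the nodes with
`p < 0`, generators those with `p > 0`. -/
def IsMigration (v w : ι → R) : Prop :=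
  ∃ l m : ι, l ≠ m ∧ ∃ p : R,
    ((v l > v m ∧ p < 0) ∨ (v l < v m ∧ p > 0)) ∧
    |v m - v l| > |p| ∧
    w l = v l + p ∧
    w m = v m - p ∧
    ∀ j : ι, j ≠ l → j ≠ m → w j = v j

variable [Fintype ι] [IsStrictOrderedRing R]

theorem IsMigration.sum_sq_lt {v w : ι → R} (h : IsMigration v w) :
    ∑ j, w j ^ 2 < ∑ j, v j ^ 2 := by
  obtain ⟨l, m, hlm, p, hsign, hgap, hl, hm, hrest⟩ := h
  have hopposite : p * (v l - v m) < 0 := by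
    rcases hsign with ⟨hlt, hp⟩ | ⟨hlt, hp⟩
    · exact mul_neg_of_neg_of_pos hp (sub_pos.mpr hlt)
    · exact mul_neg_of_pos_of_neg hp (sub_neg.mpr hlt)
  rw [← sub_neg, sum_sq_sub_sum_sq_of_transfer hlm hl hm hrest]
  exact mul_neg_of_pos_of_neg two_pos
    (mul_add_self_neg_of_abs_lt hopposite (abs_sub_comm (v m) (v l) ▸ hgap))

theorem stmt_14_general {S : Set (ι → R)} (hS : ((fun v ↦ ∑ j, v j ^ 2) '' S).IsWF) :
    ¬ ∃ P : ℕ → ι → R, (∀ k, P k ∈ S) ∧ ∀ k, IsMigration (P k) (P (k + 1)) := by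
  rintro ⟨P, hmem, hmigration⟩
  have hanti : StrictAnti fun k ↦ ∑ j, P k j ^ 2 :=
    strictAnti_nat_of_succ_lt fun k ↦ (hmigration k).sum_sq_lt
  exact Set.isWF_iff_no_descending_seq.mp hS _ hanti fun k ↦ Set.mem_image_of_mem _ (hmem k)

end Migration

/-- There is no infinite sequence of migration updates whose imbalance vectors all lie in a
finite set `S`: any such migration process terminates after finitely many steps. -/
theorem stmt_14 (n : ℕ) (hn : 1 ≤ n) (S : Set (Fin n → ℝ)) (hS : S.Finite) :
    ¬ ∃ P : ℕ → Fin n → ℝ, (∀ k, P k ∈ S) ∧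
      ∀ k : ℕ, ∃ l m : Fin n, l ≠ m ∧ ∃ p : ℝ,
        ((P k l > P k m ∧ p < 0) ∨ (P k l < P k m ∧ p > 0)) ∧
        |P k m - P k l| > |p| ∧
        P (k + 1) l = P k l + p ∧
        P (k + 1) m = P k m - p ∧
        ∀ j : Fin n, j ≠ l → j ≠ m → P (k + 1) j = P k j :=
  stmt_14_general (hS.image _).isWF
end
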